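/- (Proposition B.3, part 2.) Assume p ≠ q. Let 0 < δ < 1 satisfy √(log(1/δ)/(2 c_a n)) ≤ 0.1 ν. Then there exists a measurable set E of training configurations D_tr with P_(1)(E) ≥ 1 − 4δ such that for every D_tr ∈ E and every 0 < λ < 3 √(1.1 ν c_a n), the conditional probability P_(2)[ T̂_a < Ĉ − 4 λ √(1.1 ν/(c_a n)) ] ≤ 4 e^{−λ²/4}. -/

import Mathlib

open MeasureTheory Real
open scoped BigOperators ENNReal

/-- The asymmetric empirical MMD statistic `T̂_a` of kernel `K`, computed between the
training sample `dtr = (X₍₁₎, Y₍₁₎)` and the test sample `dte = (X₍₂₎, Y₍₂₎)`. -/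
noncomputable def asymMMD {𝒳 : Type*} (K : 𝒳 → 𝒳 → ℝ) (n1X n1Y n2X n2Y : ℕ)
    (dtr : (Fin n1X → 𝒳) × (Fin n1Y → 𝒳))
    (dte : (Fin n2X → 𝒳) × (Fin n2Y → 𝒳)) : ℝ :=
  (1/((n2X:ℝ)*(n1X:ℝ))) * ∑ i, ∑ j, K (dte.1 i) (dtr.1 j)
  - (1/((n2X:ℝ)*(n1Y:ℝ))) * ∑ i, ∑ j, K (dte.1 i) (dtr.2 j)
  - (1/((n2Y:ℝ)*(n1X:ℝ))) * ∑ i, ∑ j, K (dte.2 i) (dtr.1 j)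
  + (1/((n2Y:ℝ)*(n1Y:ℝ))) * ∑ i, ∑ j, K (dte.2 i) (dtr.2 j)

/-- The exact NTK witness function `ĝ_NTK` built from the training sample
`dtr = (X₍₁₎, Y₍₁₎)`. -/
noncomputable def ntkWitness {𝒳 : Type*} (K : 𝒳 → 𝒳 → ℝ) (n1X n1Y : ℕ)
    (dtr : (Fin n1X → 𝒳) × (Fin n1Y → 𝒳)) (x : 𝒳) : ℝ :=
  (1/(n1X:ℝ)) * ∑ j, K x (dtr.1 j) - (1/(n1Y:ℝ)) * ∑ j, K x (dtr.2 j)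

/-- The conditional mean `Ĉ = ∫ ĝ_NTK d(p−q) = ∫ ĝ_NTK dp − ∫ ĝ_NTK dq`. -/
noncomputable def condMeanC {𝒳 : Type*} [MeasurableSpace 𝒳] (K : 𝒳 → 𝒳 → ℝ)
    (n1X n1Y : ℕ) (p q : Measure 𝒳)
    (dtr : (Fin n1X → 𝒳) × (Fin n1Y → 𝒳)) : ℝ :=
  (∫ x, ntkWitness K n1X n1Y dtr x ∂p) - ∫ x, ntkWitness K n1X n1Y dtr x ∂q

lemma aux_exp (x : ℝ) (h : |x| ≤ 3/2) : Real.exp x ≤ 1 + x + x^2 := by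
  obtain ⟨y, rfl⟩ : ∃ y, x = 2*y := ⟨x/2, by ring⟩
  have hy : |y| ≤ 3/4 := by
    rw [abs_mul] at h; norm_num at h; linarith
  have hb := Real.exp_bound (x := y) (by linarith) (n := 3) (by norm_num)
  simp [Finset.sum_range_succ, Nat.factorial] at hb
  have hb2 := (abs_le.1 hb).2
  have he : Real.exp (2*y) = Real.exp y ^2 := by rw [← Real.exp_nat_mul]; norm_num
  rw [he]
  have hpos := Real.exp_pos y
  rcases le_total 0 y with h0 | h0
  · rw [abs_of_nonneg h0] at hy hb2
    have h1 : Real.exp y ≤ 1 + y + y^2/2 + 2/9*y^3 := by linarith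
    have h2 := pow_le_pow_left₀ hpos.le h1 2
    refine h2.trans ?_
    have hf : 0 ≤ 2 - (13/9*y + (1/4+4/9)*y^2 + 2/9*y^3+4/81*y^4) := by
      have : y^2 ≤ (3/4)^2 := pow_le_pow_left₀ h0 hy 2
      have : y^3 ≤ (3/4)^3 := pow_le_pow_left₀ h0 hy 3
      have : y^4 ≤ (3/4)^4 := pow_le_pow_left₀ h0 hy 4
      norm_num at *
      linarith
    nlinarith [mul_nonneg (sq_nonneg y) hf]
  · obtain ⟨z, rfl⟩ : ∃ z, y = -z := ⟨-y, by ring⟩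
    have h0 : 0 ≤ z := by linarith
    rw [abs_neg, abs_of_nonneg h0] at hy hb2
    have h1 : Real.exp (-z) ≤ 1 - z + z^2/2 + 2/9*z^3 := by linarith
    have h2 := pow_le_pow_left₀ hpos.le h1 2
    refine h2.trans ?_
    have hf : 0 ≤ 2 - ((1/4-4/9)*z^2 + 2/9*z^3+4/81*z^4) := by
      have : z^2 ≤ (3/4)^2 := pow_le_pow_left₀ h0 hy 2
      have : z^3 ≤ (3/4)^3 := pow_le_pow_left₀ h0 hy 3
      have : z^4 ≤ (3/4)^4 := pow_le_pow_left₀ h0 hy 4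
      have := sq_nonneg z
      norm_num at *
      linarith
    nlinarith [mul_nonneg (sq_nonneg z) hf, pow_nonneg h0 3]

lemma aux_int {α : Type*} [MeasurableSpace α] (p : Measure α) [IsProbabilityMeasure p]
    (f : α → ℝ) (hf : Measurable f) (C : ℝ) (hC : ∀ x, |f x| ≤ C) : Integrable f p :=
  Integrable.of_bound hf.aestronglyMeasurable C (Filter.Eventually.of_forall hC)

lemma aux_chernoff {α : Type*} [MeasurableSpace α] (p : Measure α) [IsProbabilityMeasure p]
    (m : ℕ) (f : α → ℝ) (hf : Measurable f) (hC : ∀ x, |f x| ≤ 1) (s B : ℝ) (hs : 0 ≤ s)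
    (hB : ∫ x, Real.exp (s * f x) ∂p ≤ Real.exp B) (a : ℝ) :
    (Measure.pi fun _ : Fin m => p) {x | a ≤ ∑ i, f (x i)} ≤
      ENNReal.ofReal (Real.exp (m * B - s * a)) := by
  have hm : Measurable fun x : Fin m → α => ∑ i, f (x i) := by fun_prop
  have hint : Integrable (fun x : Fin m → α => Real.exp (s * ∑ i, f (x i)))
      (Measure.pi fun _ : Fin m => p) := by
    refine aux_int _ _ (by fun_prop) (Real.exp (s * m)) fun x => ?_
    rw [abs_of_pos (Real.exp_pos _)]
    refine Real.exp_le_exp.2 (mul_le_mul_of_nonneg_left ?_ hs)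
    calc _ ≤ ∑ i : Fin m, (1:ℝ) := Finset.sum_le_sum fun i _ => (abs_le.1 (hC _)).2
      _ = m := by simp
  have h := ProbabilityTheory.measure_ge_le_exp_mul_mgf
    (μ := Measure.pi fun _ : Fin m => p) (X := fun x => ∑ i, f (x i)) a hs hint
  rw [← ENNReal.ofReal_toReal (measure_ne_top _ _)]
  refine ENNReal.ofReal_le_ofReal (h.trans ?_)
  have e : ProbabilityTheory.mgf (fun x : Fin m → α => ∑ i, f (x i))
      (Measure.pi fun _ : Fin m => p) s = (∫ x, Real.exp (s * f x) ∂p)^m := by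
    unfold ProbabilityTheory.mgf
    simp_rw [Finset.mul_sum, Real.exp_sum]
    rw [integral_fintype_prod_eq_prod (fun (_ : Fin m) x => Real.exp (s * f x))]
    simp
  rw [e, sub_eq_add_neg, Real.exp_add, mul_comm, Real.exp_nat_mul, neg_mul]
  gcongr

lemma aux_hoeff {α : Type*} [MeasurableSpace α] (p : Measure α) [IsProbabilityMeasure p]
    (m : ℕ) (f : α → ℝ) (hf : Measurable f) (h0 : ∀ x, 0 ≤ f x) (h1 : ∀ x, f x ≤ 1)
    (ν δ N : ℝ) (hν : 0 < ν) (hN : 0 < N) (hm : N ≤ m) (hδ0 : 0 < δ)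
    (hδ : Real.sqrt (Real.log (1/δ) / (2 * N)) ≤ 0.1 * ν) (hE : ∫ x, f x ∂p ≤ ν) :
    (Measure.pi fun _ : Fin m => p) {x | ¬ (∑ i, f (x i) ≤ m * (1.1 * ν))} ≤
      ENNReal.ofReal δ := by
  have habs : ∀ x, |f x| ≤ 1 := fun x => abs_le.2 ⟨by linarith [h0 x], h1 x⟩
  have hl : Real.log (1/δ) ≤ 2 * N * (0.1*ν)^2 := by
    have := (Real.sqrt_le_left (by positivity)).1 hδ
    rw [div_le_iff₀ (by positivity)] at this
    linarith
  set s := 4 * (0.1 * ν) with hs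
  have hs0 : 0 ≤ s := by positivity
  have hmgf := (ProbabilityTheory.hasSubgaussianMGF_of_mem_Icc (μ := p) (X := f) (a := 0) (b := 1)
    hf.aemeasurable (Filter.Eventually.of_forall fun x => ⟨h0 x, h1 x⟩)).mgf_le s
  have hB : ∫ x, Real.exp (s * f x) ∂p ≤ Real.exp (s * ν + s^2/8) := by
    unfold ProbabilityTheory.mgf at hmgf
    simp_rw [mul_sub, Real.exp_sub, div_eq_mul_inv] at hmgf
    rw [integral_mul_const, ← div_eq_mul_inv, div_le_iff₀ (Real.exp_pos _), ← Real.exp_add] at hmgf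
    refine hmgf.trans (Real.exp_le_exp.2 ?_)
    have := mul_le_mul_of_nonneg_left hE hs0
    norm_num
    linarith
  refine (measure_mono ?_).trans ((aux_chernoff p m f hf habs s _ hs0 hB (m * (1.1*ν))).trans ?_)
  · intro x hx
    simp only [Set.mem_ofPred_eq, not_le] at hx ⊢
    exact hx.le
  · refine ENNReal.ofReal_le_ofReal ?_
    rw [← Real.le_log_iff_exp_le hδ0]
    rw [one_div, Real.log_inv] at hl
    have : N * ν^2 ≤ m * ν^2 := by gcongr
    rw [hs]; nlinarith

lemma aux_bern {α : Type*} [MeasurableSpace α] (p : Measure α) [IsProbabilityMeasure p]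
    (m : ℕ) (f : α → ℝ) (hf : Measurable f) (hC : ∀ x, |f x| ≤ 1)
    (V N lam : ℝ) (hV : 0 < V) (hN : 0 < N) (hm : N ≤ m) (hE : ∫ x, f x ^ 2 ∂p ≤ V)
    (hl0 : 0 < lam) (hl : lam < 3 * Real.sqrt (V * N)) :
    (Measure.pi fun _ : Fin m => p)
      {x | m * (∫ x, f x ∂p + lam * Real.sqrt (V / N)) ≤ ∑ i, f (x i)} ≤
      ENNReal.ofReal (Real.exp (- lam ^ 2 / 4)) := by
  set t := lam * Real.sqrt (V / N) with ht
  have ht0 : 0 < t := by positivity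
  have ht2 : t^2 * N = lam^2 * V := by
    rw [ht, mul_pow, Real.sq_sqrt (by positivity)]; field_simp
  have ht3 : t ≤ 3 * V := by
    have : t ≤ 3 * Real.sqrt (V * N) * Real.sqrt (V/N) := by rw [ht]; gcongr
    rw [mul_assoc, ← Real.sqrt_mul (by positivity)] at this
    have e : V * N * (V/N) = V^2 := by field_simp
    rwa [e, Real.sqrt_sq hV.le] at this
  set s := t / (2 * V) with hs
  have hs0 : 0 < s := by positivity
  have hs1 : s ≤ 3/2 := by rw [hs, div_le_iff₀ (by positivity)]; linarith
  have hB : ∫ x, Real.exp (s * f x) ∂p ≤ Real.exp (s * ∫ x, f x ∂p + s^2 * V) := by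
    have hi1 : Integrable f p := aux_int p f hf 1 hC
    have hi2 : Integrable (fun x => f x ^ 2) p := aux_int p _ (by fun_prop) 1 fun x => by
      rw [abs_pow]; exact pow_le_one₀ (abs_nonneg _) (hC x)
    have hsx : ∀ x, |s * f x| ≤ 3/2 := fun x => by
      rw [abs_mul, abs_of_pos hs0]
      nlinarith [hC x, abs_nonneg (f x)]
    calc ∫ x, Real.exp (s * f x) ∂p ≤ ∫ x, (1 + s * f x + s^2 * f x ^ 2) ∂p := by
          refine integral_mono (aux_int p _ (by fun_prop) (Real.exp (3/2)) fun x => ?_) ?_ fun x => ?_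
          · rw [abs_of_pos (Real.exp_pos _)]
            exact Real.exp_le_exp.2 (abs_le.1 (hsx x)).2
          · exact ((integrable_const _).add (hi1.const_mul s)).add (hi2.const_mul _)
          · have := aux_exp _ (hsx x)
            simp only
            linarith [mul_pow s (f x) 2]
      _ = 1 + s * ∫ x, f x ∂p + s^2 * ∫ x, f x ^2 ∂p := by
          have hi3 : Integrable (fun x => 1 + s * f x) p :=
            (integrable_const _).add (hi1.const_mul s)
          rw [integral_add hi3 (hi2.const_mul _),
            integral_add (integrable_const _) (hi1.const_mul s), integral_const_mul,
            integral_const_mul]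
          simp
      _ ≤ 1 + s * ∫ x, f x ∂p + s^2 * V := by gcongr
      _ ≤ _ := by
        have := Real.add_one_le_exp (s * ∫ x, f x ∂p + s^2 * V)
        linarith
  refine (aux_chernoff p m f hf hC s _ hs0.le hB _).trans (ENNReal.ofReal_le_ofReal ?_)
  refine Real.exp_le_exp.2 ?_
  have e1 : s * V = t / 2 := by rw [hs]; field_simp
  have e2 : s * t = t^2 / (2 * V) := by rw [hs]; field_simp
  have e3 : s^2 * V = s * t / 2 := by rw [sq, mul_assoc, e1]; ring
  have e4 : N * (s * t) = lam^2/2 := by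
    rw [e2]
    have : N * (t^2/(2*V)) = (t^2 * N)/(2*V) := by ring
    rw [this, ht2]; field_simp
  have e5 : N * (s*t) ≤ m * (s*t) := by gcongr
  rw [e3]
  nlinarith

lemma aux_abs_mean {ι : Type*} (K : ι → ι → ℝ) (hK : ∀ x y, |K x y| ≤ 1) (a : ℕ)
    (z : Fin a → ι) (x : ι) : |(1/(a:ℝ)) * ∑ j, K x (z j)| ≤ 1 := by
  rw [abs_mul, abs_of_nonneg (by positivity)]
  have h : |∑ j, K x (z j)| ≤ a := by
    refine (Finset.abs_sum_le_sum_abs _ _).trans ?_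
    calc _ ≤ ∑ j : Fin a, (1:ℝ) := Finset.sum_le_sum fun i _ => hK _ _
      _ = a := by simp
  rw [one_div, inv_mul_eq_div]
  exact div_le_one_of_le₀ h (by positivity)

lemma aux_witness_abs {ι : Type*} (K : ι → ι → ℝ) (hK : ∀ x y, |K x y| ≤ 1) (a b : ℕ)
    (z : (Fin a → ι) × (Fin b → ι)) (x : ι) : |ntkWitness K a b z x / 2| ≤ 1 := by
  have h1 := abs_le.1 (aux_abs_mean K hK a z.1 x)
  have h2 := abs_le.1 (aux_abs_mean K hK b z.2 x)
  unfold ntkWitness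
  rw [abs_le]; constructor <;> linarith [h1.1, h1.2, h2.1, h2.2]

lemma aux_witness_meas {ι : Type*} [MeasurableSpace ι] (K : ι → ι → ℝ)
    (hK : Measurable (Function.uncurry K)) (a b : ℕ)
    (z : (Fin a → ι) × (Fin b → ι)) : Measurable (ntkWitness K a b z) := by
  have h : ∀ y, Measurable fun x => K x y := fun y => hK.comp measurable_prodMk_right
  unfold ntkWitness
  fun_prop

lemma aux_mean_sq {ι : Type*} (K : ι → ι → ℝ) (a : ℕ) (z : Fin a → ι) (x : ι) :
    ((1/(a:ℝ)) * ∑ j, K x (z j))^2 ≤ (1/(a:ℝ)) * ∑ j, K x (z j)^2 := by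
  have := sum_div_card_sq_le_sum_sq_div_card (s := Finset.univ) (f := fun j => K x (z j))
  simp only [Finset.card_univ, Fintype.card_fin] at this
  rw [one_div, inv_mul_eq_div, inv_mul_eq_div]
  exact this

lemma aux_var {ι : Type*} [MeasurableSpace ι] (K : ι → ι → ℝ)
    (hK : Measurable (Function.uncurry K)) (hsym : ∀ x y, K x y = K y x)
    (hb : ∀ x y, |K x y| ≤ 1) (r : Measure ι) [IsProbabilityMeasure r] (a b : ℕ)
    (ha0 : (0:ℝ) < a) (hb0 : (0:ℝ) < b)
    (z : (Fin a → ι) × (Fin b → ι)) (V : ℝ)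
    (h1 : ∑ j, ∫ x, K (z.1 j) x ^ 2 ∂r ≤ a * V)
    (h2 : ∑ j, ∫ x, K (z.2 j) x ^ 2 ∂r ≤ b * V) :
    ∫ x, (ntkWitness K a b z x / 2)^2 ∂r ≤ V := by
  have hm : ∀ y, Measurable fun x => K x y := fun y => hK.comp measurable_prodMk_right
  have hi : ∀ y, Integrable (fun x => K x y ^ 2) r := fun y =>
    aux_int r _ ((hm y).pow_const 2) 1 fun x => by
      rw [abs_pow]; exact pow_le_one₀ (abs_nonneg _) (hb x y)
  have hwm := aux_witness_meas K hK a b z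
  have hi1 : Integrable (fun x => 1/2 * ((1/(a:ℝ)) * ∑ j, K x (z.1 j)^2)) r :=
    ((integrable_finsetSum _ fun j _ => hi (z.1 j)).const_mul _).const_mul _
  have hi2 : Integrable (fun x => 1/2 * ((1/(b:ℝ)) * ∑ j, K x (z.2 j)^2)) r :=
    ((integrable_finsetSum _ fun j _ => hi (z.2 j)).const_mul _).const_mul _
  calc ∫ x, (ntkWitness K a b z x / 2)^2 ∂r
      ≤ ∫ x, (1/2 * ((1/(a:ℝ)) * ∑ j, K x (z.1 j)^2)
          + 1/2 * ((1/(b:ℝ)) * ∑ j, K x (z.2 j)^2)) ∂r := by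
        refine integral_mono (aux_int r _ (by fun_prop) 1 fun x => ?_) (hi1.add hi2) fun x => ?_
        · rw [abs_pow]; exact pow_le_one₀ (abs_nonneg _) (aux_witness_abs K hb a b z x)
        · have e1 := aux_mean_sq K a z.1 x
          have e2 := aux_mean_sq K b z.2 x
          simp only [ntkWitness]
          nlinarith [sq_nonneg ((1/(a:ℝ)) * ∑ j, K x (z.1 j) + (1/(b:ℝ)) * ∑ j, K x (z.2 j))]
    _ = 1/2 * ((1/(a:ℝ)) * ∑ j, ∫ x, K (z.1 j) x ^ 2 ∂r)
          + 1/2 * ((1/(b:ℝ)) * ∑ j, ∫ x, K (z.2 j) x ^ 2 ∂r) := by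
        rw [integral_add hi1 hi2]
        simp_rw [integral_const_mul]
        rw [integral_finsetSum _ fun j _ => hi (z.1 j), integral_finsetSum _ fun j _ => hi (z.2 j)]
        simp_rw [hsym _ (z.1 _), hsym _ (z.2 _)]
    _ ≤ 1/2 * ((1/(a:ℝ)) * (a * V)) + 1/2 * ((1/(b:ℝ)) * (b * V)) := by gcongr
    _ = V := by field_simp; ring

lemma aux_asym {ι : Type*} (K : ι → ι → ℝ) (a b c e : ℕ)
    (z : (Fin a → ι) × (Fin b → ι)) (w : (Fin c → ι) × (Fin e → ι)) :
    asymMMD K a b c e z w = (1/(c:ℝ)) * ∑ i, ntkWitness K a b z (w.1 i)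
      - (1/(e:ℝ)) * ∑ i, ntkWitness K a b z (w.2 i) := by
  unfold asymMMD ntkWitness
  simp only [Finset.sum_sub_distrib, ← Finset.mul_sum, one_div, mul_inv]
  ring

lemma aux_ev {α β : Type*} [MeasurableSpace α] [MeasurableSpace β] (μ : Measure α) (ρ : Measure β)
    [IsProbabilityMeasure μ] [IsProbabilityMeasure ρ] (A : Set α) (B : Set β) :
    (μ.prod ρ) (Prod.fst ⁻¹' A) ≤ μ A ∧ (μ.prod ρ) (Prod.snd ⁻¹' B) ≤ ρ B := by
  constructor
  · rw [← Set.prod_univ, Measure.prod_prod]; simp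
  · rw [← Set.univ_prod, Measure.prod_prod]; simp

/-- Proposition B.3, part 2: under `H₁ : p ≠ q`, for `0 < δ < 1` with
`√(log(1/δ)/(2c_a n)) ≤ 0.1ν`, there is a good event `E` of training data with
`P₍₁₎(E) ≥ 1 − 4δ` under which, for all `0 < λ < 3√(1.1νc_a n)`,
`P₍₂₎[T̂_a < Ĉ − 4λ√(1.1ν/(c_a n))] ≤ 4e^{−λ²/4}`. -/
theorem asym_mmd_conditional_concentration_H1
    {d : ℕ} (𝒳 : Set (EuclideanSpace ℝ (Fin d))) (h𝒳 : MeasurableSet 𝒳)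
    (K : 𝒳 → 𝒳 → ℝ)
    (hKmeas : Measurable (Function.uncurry K))
    (hKsym : ∀ x y, K x y = K y x)
    (hKpsd : ∀ (m : ℕ) (z : Fin m → 𝒳) (a : Fin m → ℝ),
      0 ≤ ∑ i, ∑ j, a i * a j * K (z i) (z j))
    (hKbdd : ∀ x y, |K x y| ≤ 1)
    (p q : Measure 𝒳) [IsProbabilityMeasure p] [IsProbabilityMeasure q]
    (ν : ℝ) (hν1 : ν ≤ 1)
    (hνpp : ∫ x, ∫ y, (K x y)^2 ∂p ∂p ≤ ν)
    (hνpq : ∫ x, ∫ y, (K x y)^2 ∂q ∂p ≤ ν)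
    (hνqq : ∫ x, ∫ y, (K x y)^2 ∂q ∂q ≤ ν)
    (n1X n1Y n2X n2Y : ℕ) (ca : ℝ) (hca : 0 < ca) (hca1 : ca < 1)
    (hbal1 : ca * ((n1X + n1Y + n2X + n2Y : ℕ) : ℝ) ≤ (n1X : ℝ))
    (hbal2 : ca * ((n1X + n1Y + n2X + n2Y : ℕ) : ℝ) ≤ (n1Y : ℝ))
    (hbal3 : ca * ((n1X + n1Y + n2X + n2Y : ℕ) : ℝ) ≤ (n2X : ℝ))
    (hbal4 : ca * ((n1X + n1Y + n2X + n2Y : ℕ) : ℝ) ≤ (n2Y : ℝ))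
    (hH1 : p ≠ q)
    (δ : ℝ) (hδ0 : 0 < δ) (hδ1 : δ < 1)
    (hδν : Real.sqrt (Real.log (1/δ) / (2 * ca * ((n1X + n1Y + n2X + n2Y : ℕ) : ℝ)))
      ≤ 0.1 * ν) :
    ∃ E : Set ((Fin n1X → 𝒳) × (Fin n1Y → 𝒳)), MeasurableSet E ∧
      1 - ENNReal.ofReal (4 * δ) ≤
        ((Measure.pi fun _ : Fin n1X => p).prod (Measure.pi fun _ : Fin n1Y => q)) E ∧
      ∀ dtr ∈ E, ∀ lam : ℝ, 0 < lam →
        lam < 3 * Real.sqrt (1.1 * ν * ca * ((n1X + n1Y + n2X + n2Y : ℕ) : ℝ)) →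
        ((Measure.pi fun _ : Fin n2X => p).prod (Measure.pi fun _ : Fin n2Y => q))
          {dte : (Fin n2X → 𝒳) × (Fin n2Y → 𝒳) |
            asymMMD K n1X n1Y n2X n2Y dtr dte <
              condMeanC K n1X n1Y p q dtr
              - 4 * lam * Real.sqrt (1.1 * ν / (ca * ((n1X + n1Y + n2X + n2Y : ℕ) : ℝ)))}
          ≤ ENNReal.ofReal (4 * Real.exp (-lam^2 / 4)) := by
  
  set n : ℝ := ((n1X + n1Y + n2X + n2Y : ℕ) : ℝ) with hn
  have hn0 : 0 ≤ n := by positivity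
  rcases hn0.eq_or_lt with h0 | hnpos
  · refine ⟨Set.univ, MeasurableSet.univ, ?_, ?_⟩
    · rw [measure_univ]; exact tsub_le_self
    · intro dtr _ lam hl hl'
      rw [← h0] at hl'
      simp at hl'
      linarith
  clear_value n
  set N := ca * n with hN
  have hNpos : 0 < N := by positivity
  have hνpos : 0 < ν := by
    have h1 : 0 < Real.log (1/δ) := Real.log_pos (by rw [lt_div_iff₀ hδ0]; linarith)
    have : 0 < Real.sqrt (Real.log (1/δ) / (2 * ca * n)) := Real.sqrt_pos.2 (by positivity)
    linarith
  rw [show 2 * ca * n = 2 * N by rw [hN]; ring] at hδν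
  set V := 1.1 * ν with hV
  have hVpos : 0 < V := by positivity
  have hh : ∀ r : Measure 𝒳, IsProbabilityMeasure r →
      Measurable (fun y => ∫ x, K y x ^ 2 ∂r) ∧ (∀ y, 0 ≤ ∫ x, K y x ^ 2 ∂r) ∧
      (∀ y, ∫ x, K y x ^ 2 ∂r ≤ 1) := by
    intro r hr
    refine ⟨?_, fun y => integral_nonneg fun x => sq_nonneg _, fun y => ?_⟩
    · have : StronglyMeasurable (Function.uncurry fun y x => K y x ^ 2) :=
        (hKmeas.pow_const 2).stronglyMeasurable
      exact this.integral_prod_right.measurable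
    · have : ∫ x, K y x ^ 2 ∂r ≤ ∫ x, (1:ℝ) ∂r := by
        refine integral_mono_of_nonneg (Filter.Eventually.of_forall fun x => sq_nonneg _)
          (integrable_const _) (Filter.Eventually.of_forall fun x => ?_)
        simp only
        rw [← sq_abs]
        exact pow_le_one₀ (abs_nonneg _) (hKbdd _ _)
      simpa using this
  obtain ⟨hpm, hp0, hp1⟩ := hh p inferInstance
  obtain ⟨hqm, hq0, hq1⟩ := hh q inferInstance
  have hνqp : ∫ y, ∫ x, K y x ^ 2 ∂p ∂q ≤ ν := by
    rw [integral_integral_swap]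
    · have e : (fun y => ∫ x, K x y ^ 2 ∂q) = fun y => ∫ x, K y x ^ 2 ∂q := by
        funext y; congr 1; funext x; rw [hKsym]
      rw [e]
      exact hνpq
    · refine aux_int _ _ (hKmeas.pow_const 2) 1 fun x => ?_
      change |K x.1 x.2 ^ 2| ≤ 1
      rw [abs_pow]; exact pow_le_one₀ (abs_nonneg _) (hKbdd _ _)
  have A1 := aux_hoeff p n1X _ hpm hp0 hp1 ν δ N hνpos hNpos hbal1 hδ0 hδν hνpp
  have A2 := aux_hoeff p n1X _ hqm hq0 hq1 ν δ N hνpos hNpos hbal1 hδ0 hδν hνpq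
  have A3 := aux_hoeff q n1Y _ hpm hp0 hp1 ν δ N hνpos hNpos hbal2 hδ0 hδν hνqp
  have A4 := aux_hoeff q n1Y _ hqm hq0 hq1 ν δ N hνpos hNpos hbal2 hδ0 hδν hνqq
  set S1 : Set (Fin n1X → 𝒳) := {x | ¬ (∑ i, ∫ y, K (x i) y ^ 2 ∂p ≤ n1X * V)} with hS1
  set S2 : Set (Fin n1X → 𝒳) := {x | ¬ (∑ i, ∫ y, K (x i) y ^ 2 ∂q ≤ n1X * V)} with hS2
  set S3 : Set (Fin n1Y → 𝒳) := {x | ¬ (∑ i, ∫ y, K (x i) y ^ 2 ∂p ≤ n1Y * V)} with hS3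
  set S4 : Set (Fin n1Y → 𝒳) := {x | ¬ (∑ i, ∫ y, K (x i) y ^ 2 ∂q ≤ n1Y * V)} with hS4
  have hmeas : ∀ (r : Measure 𝒳) (m : ℕ), Measurable (fun y => ∫ x, K y x ^ 2 ∂r) →
      MeasurableSet {x : Fin m → 𝒳 | ¬ (∑ i, ∫ y, K (x i) y ^ 2 ∂r ≤ m * V)} := by
    intro r m h
    have h2 : Measurable fun x : Fin m → 𝒳 => ∑ i, ∫ y, K (x i) y ^ 2 ∂r :=
      Finset.measurable_sum _ fun i _ => h.comp (measurable_pi_apply i)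
    exact (measurableSet_le h2 measurable_const).compl
  set P1 := (Measure.pi fun _ : Fin n1X => p).prod (Measure.pi fun _ : Fin n1Y => q) with hP1
  set bad : Set ((Fin n1X → 𝒳) × (Fin n1Y → 𝒳)) :=
    (Prod.fst ⁻¹' S1 ∪ Prod.fst ⁻¹' S2) ∪ (Prod.snd ⁻¹' S3 ∪ Prod.snd ⁻¹' S4) with hbad
  have hbadm : MeasurableSet bad :=
    ((measurable_fst (hmeas p n1X hpm)).union (measurable_fst (hmeas q n1X hqm))).union
      ((measurable_snd (hmeas p n1Y hpm)).union (measurable_snd (hmeas q n1Y hqm)))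
  refine ⟨badᶜ, hbadm.compl, ?_, ?_⟩
  · rw [prob_compl_eq_one_sub hbadm]
    refine tsub_le_tsub_left ?_ _
    have b1 := ((aux_ev (Measure.pi fun _ : Fin n1X => p) (Measure.pi fun _ : Fin n1Y => q) S1 S3).1).trans A1
    have b2 := ((aux_ev (Measure.pi fun _ : Fin n1X => p) (Measure.pi fun _ : Fin n1Y => q) S2 S3).1).trans A2
    have b3 := ((aux_ev (Measure.pi fun _ : Fin n1X => p) (Measure.pi fun _ : Fin n1Y => q) S1 S3).2).trans A3
    have b4 := ((aux_ev (Measure.pi fun _ : Fin n1X => p) (Measure.pi fun _ : Fin n1Y => q) S1 S4).2).trans A4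
    calc P1 bad ≤ (P1 (Prod.fst ⁻¹' S1) + P1 (Prod.fst ⁻¹' S2)) +
          (P1 (Prod.snd ⁻¹' S3) + P1 (Prod.snd ⁻¹' S4)) :=
          (measure_union_le _ _).trans (add_le_add (measure_union_le _ _) (measure_union_le _ _))
      _ ≤ (ENNReal.ofReal δ + ENNReal.ofReal δ) + (ENNReal.ofReal δ + ENNReal.ofReal δ) :=
          add_le_add (add_le_add b1 b2) (add_le_add b3 b4)
      _ = ENNReal.ofReal (4 * δ) := by
          rw [← ENNReal.ofReal_add hδ0.le hδ0.le, ← ENNReal.ofReal_add (by positivity) (by positivity)]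
          congr 1; ring
  · intro dtr hdtr lam hl0 hl
    have g1 : dtr.1 ∉ S1 := fun h => hdtr (Or.inl (Or.inl h))
    have g2 : dtr.1 ∉ S2 := fun h => hdtr (Or.inl (Or.inr h))
    have g3 : dtr.2 ∉ S3 := fun h => hdtr (Or.inr (Or.inl h))
    have g4 : dtr.2 ∉ S4 := fun h => hdtr (Or.inr (Or.inr h))
    have g1 := not_not.1 g1
    have g2 := not_not.1 g2
    have g3 := not_not.1 g3
    have g4 := not_not.1 g4
    have hX0 := hNpos.trans_le hbal1
    have hY0 := hNpos.trans_le hbal2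
    have hX2 := hNpos.trans_le hbal3
    have hY2 := hNpos.trans_le hbal4
    have vp := aux_var K hKmeas hKsym hKbdd p n1X n1Y hX0 hY0 dtr V g1 g3
    have vq := aux_var K hKmeas hKsym hKbdd q n1X n1Y hX0 hY0 dtr V g2 g4
    have hwm := aux_witness_meas K hKmeas n1X n1Y dtr
    have hwb := aux_witness_abs K hKbdd n1X n1Y dtr
    rw [show V * ca * n = V * N by rw [hN]; ring] at hl
    have B1 := aux_bern p n2X (fun x => -(ntkWitness K n1X n1Y dtr x / 2)) (by fun_prop)
      (fun x => by rw [abs_neg]; exact hwb x) V N lam hVpos hNpos hbal3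
      (by simpa only [neg_sq] using vp) hl0 hl
    have B2 := aux_bern q n2Y (fun x => (ntkWitness K n1X n1Y dtr x / 2)) (by fun_prop)
      hwb V N lam hVpos hNpos hbal4 vq hl0 hl
    rw [integral_neg, integral_div] at B1
    rw [integral_div] at B2
    simp_rw [Finset.sum_neg_distrib, ← Finset.sum_div] at B1
    simp_rw [← Finset.sum_div] at B2
    set t := Real.sqrt (V / N) with ht
    set U1 : Set (Fin n2X → 𝒳) :=
      {x | n2X * (-((∫ x, ntkWitness K n1X n1Y dtr x ∂p) / 2) + lam * t) ≤ -((∑ i, ntkWitness K n1X n1Y dtr (x i)) / 2)} with hU1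
    change (Measure.pi fun _ : Fin n2X => p) U1 ≤ _ at B1
    set U2 : Set (Fin n2Y → 𝒳) :=
      {x | n2Y * ((∫ x, ntkWitness K n1X n1Y dtr x ∂q) / 2 + lam * t) ≤ (∑ i, ntkWitness K n1X n1Y dtr (x i)) / 2} with hU2
    change (Measure.pi fun _ : Fin n2Y => q) U2 ≤ _ at B2
    have c := aux_ev (Measure.pi fun _ : Fin n2X => p) (Measure.pi fun _ : Fin n2Y => q) U1 U2
    refine (measure_mono (t := Prod.fst ⁻¹' U1 ∪ Prod.snd ⁻¹' U2) ?_).trans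
      ((measure_union_le _ _).trans
      ((add_le_add (c.1.trans B1) (c.2.trans B2)).trans ?_))
    · intro w hw
      have hw : asymMMD K n1X n1Y n2X n2Y dtr w < condMeanC K n1X n1Y p q dtr - 4 * lam * t := hw
      rw [aux_asym] at hw
      unfold condMeanC at hw
      by_contra hcon
      have k1 : w.1 ∉ U1 := fun h => hcon (Or.inl h)
      have k2 : w.2 ∉ U2 := fun h => hcon (Or.inr h)
      simp only [hU1, Set.mem_ofPred_eq, not_le] at k1
      simp only [hU2, Set.mem_ofPred_eq, not_le] at k2
      rw [← div_lt_iff₀' hX2] at k1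
      rw [← div_lt_iff₀' hY2] at k2
      simp only [one_div, inv_mul_eq_div] at hw
      rw [neg_div, div_right_comm] at k1
      rw [div_right_comm] at k2
      linarith
    · rw [← ENNReal.ofReal_add (Real.exp_pos _).le (Real.exp_pos _).le]
      refine ENNReal.ofReal_le_ofReal ?_
      linarith [Real.exp_pos (-lam^2/4)]
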